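/- (Theorem: objective error of Pro-DUCA) Suppose the problem setup holds and the sequences (x^k)_{k≥0}, (y^k)_{k≥0}, (z^k)_{k≥0} are generated by Pro-DUCA. Then for every k ≥ 1, −R_1'/k ≤ f(x̄^k) − f(x*) ≤ R_2'/k, where C_1 := √(N·λ_1(P_A))·‖y°‖, C_2 := ((‖y^0‖_A + C_1)² + α‖x^0 − x*‖² + (1/ρ)·(v^0 − v*)ᵀH̃†(v^0 − v*))^{1/2}, R_1' := C_1·(‖y^0‖_A + C_1 + C_2), and R_2' := (1/(2ρ))·(v^0 − v*)ᵀH̃†(v^0 − v*) + ½‖y^0‖²_A + (α/2)‖x^0 − x*‖². -/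

import Mathlib

open Matrix
open scoped Kronecker

abbrev Blk (m p : ℕ) := Sum (Fin m) (Fin p)
abbrev Idx (N m p : ℕ) := Fin N × Blk m p

def projK {N m p : ℕ} (y : Idx N m p → ℝ) : Idx N m p → ℝ :=
  fun ij =>
    match ij with
    | (i, Sum.inl j) => max (y (i, Sum.inl j)) 0
    | (i, Sum.inr j) => y (i, Sum.inr j)

def projKpolar {N m p : ℕ} (y : Idx N m p → ℝ) : Idx N m p → ℝ :=
  fun ij =>
    match ij with
    | (i, Sum.inl j) => min (y (i, Sum.inl j)) 0
    | (_, Sum.inr _) => 0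

def memK {N m p : ℕ} (y : Idx N m p → ℝ) : Prop :=
  ∀ (i : Fin N) (j : Fin m), 0 ≤ y (i, Sum.inl j)

def IsMPInv {n : Type*} [Fintype n] [DecidableEq n] (M Md : Matrix n n ℝ) : Prop :=
  M * Md * M = M ∧ Md * M * Md = Md ∧ (M * Md)ᵀ = M * Md ∧ (Md * M)ᵀ = Md * M

def quadForm {n : Type*} [Fintype n] (M : Matrix n n ℝ) (w : n → ℝ) : ℝ :=
  w ⬝ᵥ (M *ᵥ w)

lemma aux_lim (a b : ℝ) (h : ∀ t : ℝ, 0 < t → t ≤ 1 → 0 ≤ t * a + t ^ 2 * b) : 0 ≤ a := by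
  by_contra ha
  push Not at ha
  have hb : 0 < |b| + 1 := by positivity
  have hab : 0 < |b| + 1 - a := by linarith
  set t := (-a) / (2 * (|b| + 1 - a)) with ht
  have ht0 : 0 < t := by apply div_pos <;> linarith
  have ht1 : t ≤ 1 := by
    rw [ht, div_le_one (by linarith)]; linarith
  have h1 := h t ht0 ht1
  have h2 : 0 ≤ a + t * b := by
    have : 0 ≤ t * (a + t * b) := by linarith [h1]
    exact nonneg_of_mul_nonneg_right this ht0
  have h3 : t * b ≤ t * (|b| + 1 - a) :=
    mul_le_mul_of_nonneg_left (by linarith [le_abs_self b]) ht0.le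
  have h4 : t * (|b| + 1 - a) = -a / 2 := by
    rw [ht]; field_simp
  linarith

lemma psd_symm {n : Type*} [Fintype n] {M : Matrix n n ℝ} (hM : M.PosSemidef) (a b : n → ℝ) :
    a ⬝ᵥ (M *ᵥ b) = b ⬝ᵥ (M *ᵥ a) := by
  have h : Mᵀ = M := by simpa using hM.1.eq
  rw [dotProduct_mulVec, ← mulVec_transpose, h, dotProduct_comm]

lemma psd_nonneg {n : Type*} [Fintype n] {M : Matrix n n ℝ} (hM : M.PosSemidef) (a : n → ℝ) :
    0 ≤ a ⬝ᵥ (M *ᵥ a) := by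
  simpa using hM.dotProduct_mulVec_nonneg a

lemma psd_cs {n : Type*} [Fintype n] {M : Matrix n n ℝ} (hM : M.PosSemidef) (a b : n → ℝ) :
    |a ⬝ᵥ (M *ᵥ b)| ≤ Real.sqrt (quadForm M a) * Real.sqrt (quadForm M b) := by
  rw [← Real.sqrt_mul (show 0 ≤ quadForm M a from psd_nonneg hM a), ← Real.sqrt_sq_eq_abs]
  apply Real.sqrt_le_sqrt
  have h : ∀ t : ℝ, 0 ≤ (quadForm M b) * (t * t) + (2 * (a ⬝ᵥ (M *ᵥ b))) * t + quadForm M a := by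
    intro t
    have h1 := psd_nonneg hM (a + t • b)
    simp only [mulVec_add, mulVec_smul, dotProduct_add, add_dotProduct, smul_dotProduct,
      dotProduct_smul, smul_eq_mul, psd_symm hM b a] at h1
    unfold quadForm
    linarith
  have := discrim_le_zero h
  unfold discrim at this
  nlinarith

lemma psd_three {n : Type*} [Fintype n] {M : Matrix n n ℝ} (hM : M.PosSemidef) (a b c : n → ℝ) :
    (quadForm M (a - c) - quadForm M (b - c)) / 2 ≤ (a - c) ⬝ᵥ (M *ᵥ (a - b)) := by
  have h1 := psd_nonneg hM (a - b)
  simp only [quadForm, mulVec_sub, dotProduct_sub, sub_dotProduct, psd_symm hM b a,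
    psd_symm hM c a, psd_symm hM c b] at *
  linarith

lemma psd_max {N : ℕ} {PA : Matrix (Fin N) (Fin N) ℝ} (hPA : PA.PosSemidef) (lam1 : ℝ)
    (hlam1max : ∀ (μ : ℝ) (v : Fin N → ℝ), v ≠ 0 → PA *ᵥ v = μ • v → μ ≤ lam1) (v : Fin N → ℝ) :
    v ⬝ᵥ (PA *ᵥ v) ≤ lam1 * (v ⬝ᵥ v) := by
  have hH : (lam1 • (1 : Matrix (Fin N) (Fin N) ℝ) - PA).IsHermitian := by
    have h : PAᵀ = PA := by simpa using hPA.1.eq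
    unfold IsHermitian
    simp [h]
  have hp : (lam1 • (1 : Matrix (Fin N) (Fin N) ℝ) - PA).PosSemidef := by
    rw [hH.posSemidef_iff_eigenvalues_nonneg]
    intro i
    have h1 := hH.mulVec_eigenvectorBasis i
    have hne : (⇑(hH.eigenvectorBasis i) : Fin N → ℝ) ≠ 0 := by
      intro h0
      have := hH.eigenvectorBasis.orthonormal.ne_zero i
      apply this
      ext j
      exact congrFun h0 j
    have h2 := hlam1max (lam1 - hH.eigenvalues i) _ hne (by
      rw [sub_mulVec, smul_mulVec, one_mulVec] at h1
      rw [sub_smul, ← h1]; simp)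
    simp; linarith
  have := psd_nonneg hp v
  rw [sub_mulVec, smul_mulVec, one_mulVec, dotProduct_sub, dotProduct_smul] at this
  simp at this; linarith

lemma mp_left {n : Type*} [Fintype n] [DecidableEq n] {M Md : Matrix n n ℝ} (hM : M.PosSemidef)
    (h : IsMPInv M Md) : M * (M * Md) = M := by
  have hs : Mᵀ = M := by simpa using hM.1.eq
  have h1 := congrArg Matrix.transpose h.1
  rw [transpose_mul, h.2.2.1, hs] at h1
  exact h1

lemma mp_half {n : Type*} [Fintype n] [DecidableEq n] {R M Md : Matrix n n ℝ} (hR : R.PosSemidef)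
    (hRM : R * R = M) (h : IsMPInv M Md) : M * Md * R = R := by
  have h0 : ((1 - M * Md) * R) * R = 0 := by
    rw [Matrix.mul_assoc, hRM, Matrix.sub_mul, Matrix.one_mul, h.1, sub_self]
  have h1 : ((1 - M * Md) * R) * ((1 - M * Md) * R)ᴴ = 0 := by
    rw [conjTranspose_mul, hR.1.eq, ← Matrix.mul_assoc, h0, Matrix.zero_mul]
  rw [Matrix.self_mul_conjTranspose_eq_zero] at h1
  rw [Matrix.sub_mul, Matrix.one_mul, sub_eq_zero] at h1
  exact h1.symm

lemma half_null {n : Type*} [Fintype n] {R M : Matrix n n ℝ} (hR : R.PosSemidef)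
    (hRM : R * R = M) (v : n → ℝ) (h : M *ᵥ v = 0) : R *ᵥ v = 0 := by
  have h1 : (R *ᵥ v) ⬝ᵥ (R *ᵥ v) = 0 := by
    rw [psd_symm hR, mulVec_mulVec, hRM, h, dotProduct_zero]
  exact dotProduct_self_eq_zero.1 h1

lemma kron_mulVec {N m p : ℕ} (P : Matrix (Fin N) (Fin N) ℝ) (v : Idx N m p → ℝ) (i : Fin N)
    (j : Blk m p) :
    ((P ⊗ₖ (1 : Matrix (Blk m p) (Blk m p) ℝ)) *ᵥ v) (i, j) = (P *ᵥ fun i' => v (i', j)) i := by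
  simp only [mulVec, dotProduct, Fintype.sum_prod_type, kroneckerMap_apply, one_apply]
  simp

lemma projK_smul {N m p : ℕ} (δ u : Idx N m p → ℝ) (hδ : ∀ i, 0 < δ i) (ij : Idx N m p) :
    projK (fun a => δ a * u a) ij = δ ij * projK u ij := by
  rcases ij with ⟨i, j | j⟩
  · simp only [projK]
    rw [mul_max_of_nonneg _ _ (hδ _).le, mul_zero]
  · simp only [projK]

lemma projK_decomp {N m p : ℕ} (u : Idx N m p → ℝ) (ij : Idx N m p) :
    projK u ij = u ij - projKpolar u ij := by
  rcases ij with ⟨i, j | j⟩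
  · simp only [projK, projKpolar]
    have := max_add_min (u (i, Sum.inl j)) 0
    linarith
  · simp [projK, projKpolar]

lemma projK_orth {N m p : ℕ} (u : Idx N m p → ℝ) (ij : Idx N m p) :
    projK u ij * projKpolar u ij = 0 := by
  rcases ij with ⟨i, j | j⟩
  · simp only [projK, projKpolar]
    rw [max_mul_min]; simp
  · simp [projK, projKpolar]

lemma max_sq_aux (a b c : ℝ) (h : c ≤ a + b) :
    max c 0 ^ 2 ≤ max a 0 ^ 2 + 2 * max a 0 * b + b ^ 2 := by
  rcases le_total c 0 with hc | hc <;> rcases le_total a 0 with ha | ha <;>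
    simp only [max_eq_left, max_eq_right, hc, ha] <;> nlinarith [sq_nonneg (a + b)]

lemma projK_sq {N m p : ℕ} (u u' b : Idx N m p → ℝ)
    (h1 : ∀ i j, u' (i, Sum.inl j) ≤ u (i, Sum.inl j) + b (i, Sum.inl j))
    (h2 : ∀ i j, u' (i, Sum.inr j) = u (i, Sum.inr j) + b (i, Sum.inr j)) (ij : Idx N m p) :
    projK u' ij ^ 2 ≤ projK u ij ^ 2 + 2 * projK u ij * b ij + b ij ^ 2 := by
  rcases ij with ⟨i, j | j⟩
  · exact max_sq_aux _ _ _ (h1 i j)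
  · simp only [projK]
    rw [h2]; apply le_of_eq; ring

lemma jensen {E : Type*} [AddCommGroup E] [Module ℝ E] (φ : E → ℝ) (hφ : ConvexOn ℝ Set.univ φ)
    (x : ℕ → E) (k : ℕ) (hk : 1 ≤ k) :
    φ ((1 / (k : ℝ)) • ∑ l ∈ Finset.Icc 1 k, x l) ≤ (∑ l ∈ Finset.Icc 1 k, φ (x l)) / k := by
  have hk0 : (0 : ℝ) < k := by exact_mod_cast hk
  have := hφ.map_sum_le (t := Finset.Icc 1 k) (w := fun _ => 1 / (k : ℝ)) (p := x)
    (fun _ _ => by positivity) (by simp; field_simp) (fun _ _ => Set.mem_univ _)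
  rw [← Finset.smul_sum, ← Finset.smul_sum] at this
  simpa [div_eq_inv_mul] using this

/-- Optimality condition of the proximal step. -/
lemma opt_step {N m p : ℕ} {d : Fin N → ℕ} (F : (∀ i, Fin (d i) → ℝ) → ℝ)
    (hF : ConvexOn ℝ Set.univ F) (tg : (∀ i, Fin (d i) → ℝ) → Idx N m p → ℝ)
    (h1 : ∀ i j, ConvexOn ℝ Set.univ (fun w => tg w (i, Sum.inl j)))
    (h2 : ∀ (i : Fin N) (j : Fin p) (x w : ∀ i, Fin (d i) → ℝ) (a b : ℝ), a + b = 1 →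
      tg (a • x + b • w) (i, Sum.inr j) = a * tg x (i, Sum.inr j) + b * tg w (i, Sum.inr j))
    (δ e : Idx N m p → ℝ) (hδ : ∀ i, 0 < δ i) (α : ℝ)
    (x xk w : ∀ i, Fin (d i) → ℝ)
    (hmin : ∀ t : ℝ, 0 < t → t ≤ 1 →
      F x + (1 / 2) * quadForm (diagonal δ) (projK (e + tg x))
        + (α / 2) * ∑ i, ∑ j, (x i j - xk i j) ^ 2
      ≤ F ((1 - t) • x + t • w)
        + (1 / 2) * quadForm (diagonal δ) (projK (e + tg ((1 - t) • x + t • w)))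
        + (α / 2) * ∑ i, ∑ j, (((1 - t) • x + t • w) i j - xk i j) ^ 2) :
    F x + (fun ij => δ ij * projK (e + tg x) ij) ⬝ᵥ tg x
      ≤ F w + (fun ij => δ ij * projK (e + tg x) ij) ⬝ᵥ tg w
        + (α / 2) * ((∑ i, ∑ j, (xk i j - w i j) ^ 2) - ∑ i, ∑ j, (x i j - w i j) ^ 2
          - ∑ i, ∑ j, (x i j - xk i j) ^ 2) := by
  have hq : ∀ v : Idx N m p → ℝ, quadForm (diagonal δ) v = ∑ ij, δ ij * v ij ^ 2 := by
    intro v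
    simp only [quadForm, mulVec_diagonal, dotProduct]
    exact Finset.sum_congr rfl fun _ _ => by ring
  set S1 := ∑ i, ∑ j, (xk i j - w i j) ^ 2 with hS1
  set S2 := ∑ i, ∑ j, (x i j - w i j) ^ 2 with hS2
  set S3 := ∑ i, ∑ j, (x i j - xk i j) ^ 2 with hS3
  set yp := (fun ij => δ ij * projK (e + tg x) ij) with hyp
  have key : 0 ≤ (F w - F x + (yp ⬝ᵥ tg w - yp ⬝ᵥ tg x) + (α / 2) * (S1 - S2 - S3)) := by
    apply aux_lim _ ((1 / 2) * (∑ ij, δ ij * (tg w ij - tg x ij) ^ 2) + (α / 2) * S2)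
    intro t ht0 ht1
    have hm := hmin t ht0 ht1
    have hFc : F ((1 - t) • x + t • w) ≤ (1 - t) * F x + t * F w := by
      have := hF.2 (Set.mem_univ x) (Set.mem_univ w) (sub_nonneg.2 ht1) ht0.le (by ring)
      simpa using this
    have hS : ∑ i, ∑ j, (((1 - t) • x + t • w) i j - xk i j) ^ 2
        = S3 + t * (S1 - S2 - S3) + t ^ 2 * S2 := by
      rw [hS1, hS2, hS3]
      simp only [Finset.mul_sum, ← Finset.sum_add_distrib, ← Finset.sum_sub_distrib]
      refine Finset.sum_congr rfl fun i _ => Finset.sum_congr rfl fun j _ => ?_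
      simp only [Pi.add_apply, Pi.smul_apply, smul_eq_mul]
      ring
    have hQ : quadForm (diagonal δ) (projK (e + tg ((1 - t) • x + t • w)))
        ≤ quadForm (diagonal δ) (projK (e + tg x)) + 2 * t * (yp ⬝ᵥ tg w - yp ⬝ᵥ tg x)
          + t ^ 2 * (∑ ij, δ ij * (tg w ij - tg x ij) ^ 2) := by
      rw [hq, hq]
      simp only [dotProduct, hyp, Finset.mul_sum, ← Finset.sum_add_distrib,
        ← Finset.sum_sub_distrib]
      refine Finset.sum_le_sum fun ij _ => ?_
      have := projK_sq (e + tg x) (e + tg ((1 - t) • x + t • w))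
        (fun ij => t * (tg w ij - tg x ij))
        (fun i j => by
          have := (h1 i j).2 (Set.mem_univ x) (Set.mem_univ w) (sub_nonneg.2 ht1) ht0.le (by ring)
          simp only [smul_eq_mul, Pi.add_apply] at this ⊢
          linarith)
        (fun i j => by
          have := h2 i j x w (1 - t) t (by ring)
          simp only [Pi.add_apply] at this ⊢
          rw [this]; ring) ij
      have := mul_le_mul_of_nonneg_left this (hδ ij).le
      linarith
    rw [hS] at hm
    nlinarith
  linarith

theorem stmt3
    (N m p : ℕ) (hN : 1 ≤ N) (hm : 1 ≤ m) (hp : 1 ≤ p)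
    (d : Fin N → ℕ)
    (X : ∀ i : Fin N, Set (Fin (d i) → ℝ))
    (hXne : ∀ i, (X i).Nonempty) (hXcl : ∀ i, IsClosed (X i))
    (hXcv : ∀ i, Convex ℝ (X i))
    (f : ∀ i : Fin N, (Fin (d i) → ℝ) → ℝ)
    (hf : ∀ i, ConvexOn ℝ Set.univ (f i))
    (g : ∀ i : Fin N, (Fin (d i) → ℝ) → Fin m → ℝ)
    (hg : ∀ i j, ConvexOn ℝ Set.univ (fun xi => g i xi j))
    (B : ∀ i : Fin N, Matrix (Fin p) (Fin (d i)) ℝ) (c : ∀ i : Fin N, Fin p → ℝ)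
    (F : (∀ i, Fin (d i) → ℝ) → ℝ) (hF : ∀ x, F x = ∑ i, f i (x i))
    (tg : (∀ i, Fin (d i) → ℝ) → Idx N m p → ℝ)
    (htg1 : ∀ x (i : Fin N) (j : Fin m), tg x (i, Sum.inl j) = g i (x i) j)
    (htg2 : ∀ x (i : Fin N) (j : Fin p), tg x (i, Sum.inr j) = (B i *ᵥ x i + c i) j)
    (ρ : ℝ) (hρ : 0 < ρ)
    (PA PH PHt : Matrix (Fin N) (Fin N) ℝ)
    (hPA : PA.PosSemidef) (hPH : PH.PosSemidef) (hPHt : PHt.PosSemidef)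
    (hDdiag : (PA + ρ • PH).IsDiag) (hDpd : (PA + ρ • PH).PosDef)
    (hHHt : (PH - PHt).PosSemidef)
    (hPHnull : ∀ v : Fin N → ℝ, PH *ᵥ v = 0 ↔ ∃ t : ℝ, v = fun _ => t)
    (hPHtnull : ∀ v : Fin N → ℝ, PHt *ᵥ v = 0 ↔ ∃ t : ℝ, v = fun _ => t)
    (A Htld D : Matrix (Idx N m p) (Idx N m p) ℝ)
    (hA : A = PA ⊗ₖ (1 : Matrix (Blk m p) (Blk m p) ℝ))
    (hHtld : Htld = PHt ⊗ₖ (1 : Matrix (Blk m p) (Blk m p) ℝ))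
    (hD : D = A + ρ • (PH ⊗ₖ (1 : Matrix (Blk m p) (Blk m p) ℝ)))
    (Hhalf : Matrix (Idx N m p) (Idx N m p) ℝ)
    (hHhalfpsd : Hhalf.PosSemidef) (hHhalfsq : Hhalf * Hhalf = Htld)
    (Htdag : Matrix (Idx N m p) (Idx N m p) ℝ) (hHtdag : IsMPInv Htld Htdag)
    (Hhalfdag : Matrix (Idx N m p) (Idx N m p) ℝ) (hHhalfdag : IsMPInv Hhalf Hhalfdag)
    (lam1 : ℝ)
    (hlam1ev : ∃ v : Fin N → ℝ, v ≠ 0 ∧ PA *ᵥ v = lam1 • v)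
    (hlam1max : ∀ (μ : ℝ) (v : Fin N → ℝ), v ≠ 0 → PA *ᵥ v = μ • v → μ ≤ lam1)
    (x : ℕ → ∀ i, Fin (d i) → ℝ) (y z : ℕ → Idx N m p → ℝ)
    (hxX : ∀ k, ∀ i, x (k + 1) i ∈ X i)
    (hy0 : memK (y 0))
    (hyupd : ∀ k, y (k + 1) = projK (D⁻¹ *ᵥ ((A *ᵥ y k) - (Hhalf *ᵥ z k) + tg (x (k + 1)))))
    (hzupd : ∀ k, z (k + 1) = z k + ρ • (Hhalf *ᵥ y (k + 1)))
    (α : ℝ) (hα : 0 < α)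
    (hxmin : ∀ k, ∀ w, (∀ i, w i ∈ X i) →
      F (x (k + 1))
          + (1 / 2) * quadForm D⁻¹ (projK ((A *ᵥ y k) - (Hhalf *ᵥ z k) + tg (x (k + 1))))
          + (α / 2) * ∑ i, ∑ j, (x (k + 1) i j - x k i j) ^ 2
        ≤ F w + (1 / 2) * quadForm D⁻¹ (projK ((A *ᵥ y k) - (Hhalf *ᵥ z k) + tg w))
          + (α / 2) * ∑ i, ∑ j, (w i j - x k i j) ^ 2)
    (xs : ∀ i, Fin (d i) → ℝ) (hxsX : ∀ i, xs i ∈ X i)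
    (hxsg : ∀ j, (∑ i, g i (xs i) j) ≤ 0)
    (hxsh : ∀ j, (∑ i, (B i *ᵥ xs i + c i) j) = 0)
    (mus : Fin m → ℝ) (hmus : ∀ j, 0 ≤ mus j) (lams : Fin p → ℝ)
    (hcs : (∑ j, mus j * ∑ i, g i (xs i) j) = 0)
    (hsaddle : ∀ w, (∀ i, w i ∈ X i) →
      F xs + (∑ j, mus j * ∑ i, g i (xs i) j) + (∑ j, lams j * ∑ i, (B i *ᵥ xs i + c i) j)
        ≤ F w + (∑ j, mus j * ∑ i, g i (w i) j) + (∑ j, lams j * ∑ i, (B i *ᵥ w i + c i) j))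
    (ys : Idx N m p → ℝ) (hys : ∀ (i : Fin N) (j : Blk m p), ys (i, j) = Sum.elim mus lams j)
    (zstar vstar : Idx N m p → ℝ)
    (hzstar : zstar = Hhalfdag *ᵥ tg xs)
    (hvstar : vstar = Hhalf *ᵥ zstar)
    (xbar : ℕ → ∀ i, Fin (d i) → ℝ)
    (hxbar : ∀ k (i : Fin N) (j : Fin (d i)),
      xbar k i j = (∑ l ∈ Finset.Icc 1 k, x l i j) / (k : ℝ))
    (C1 C2 : ℝ)
    (hC1 : C1 = Real.sqrt ((N : ℝ) * lam1) * Real.sqrt ((∑ j, (mus j) ^ 2) + ∑ j, (lams j) ^ 2))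
    (hC2 : C2 = Real.sqrt ((Real.sqrt (quadForm A (y 0)) + C1) ^ 2
      + α * (∑ i, ∑ j, (x 0 i j - xs i j) ^ 2)
      + (1 / ρ) * quadForm Htdag ((Hhalf *ᵥ z 0) - vstar)))
    :
    ∀ k : ℕ, 1 ≤ k →
      -((C1 * (Real.sqrt (quadForm A (y 0)) + C1 + C2)) / (k : ℝ))
          ≤ F (xbar k) - F xs
        ∧ F (xbar k) - F xs
          ≤ ((1 / (2 * ρ)) * quadForm Htdag ((Hhalf *ᵥ z 0) - vstar)
              + (1 / 2) * quadForm A (y 0)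
              + (α / 2) * ∑ i, ∑ j, (x 0 i j - xs i j) ^ 2) / (k : ℝ) := by

  -- convexity facts
  have hFc : ConvexOn ℝ Set.univ F := by
    refine ⟨convex_univ, fun a _ b _ s t hs ht hst => ?_⟩
    rw [hF, hF, hF]
    simp only [smul_eq_mul, Finset.mul_sum, ← Finset.sum_add_distrib]
    refine Finset.sum_le_sum fun i _ => ?_
    simpa using (hf i).2 (Set.mem_univ (a i)) (Set.mem_univ (b i)) hs ht hst
  have hc1 : ∀ i j, ConvexOn ℝ Set.univ (fun w => tg w (i, Sum.inl j)) := by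
    intro i j
    refine ⟨convex_univ, fun a _ b _ s t hs ht hst => ?_⟩
    simp only [htg1]
    simpa using (hg i j).2 (Set.mem_univ (a i)) (Set.mem_univ (b i)) hs ht hst
  have hc2 : ∀ (i : Fin N) (j : Fin p) (x w : ∀ i, Fin (d i) → ℝ) (a b : ℝ), a + b = 1 →
      tg (a • x + b • w) (i, Sum.inr j) = a * tg x (i, Sum.inr j) + b * tg w (i, Sum.inr j) := by
    intro i j x w a b hab
    simp only [htg2, Pi.add_apply, Pi.smul_apply, mulVec_add, mulVec_smul, smul_eq_mul]
    have : c i j = (a + b) * c i j := by rw [hab, one_mul]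
    linear_combination this
  have hysnn : ∀ i j, 0 ≤ ys (i, Sum.inl j) := by
    intro i j; rw [hys]; exact hmus j
  have hLc : ConvexOn ℝ Set.univ (fun w => ys ⬝ᵥ tg w) := by
    refine ⟨convex_univ, fun a _ b _ s t hs ht hst => ?_⟩
    simp only [smul_eq_mul, dotProduct, Finset.mul_sum, ← Finset.sum_add_distrib]
    refine Finset.sum_le_sum fun ij _ => ?_
    rcases ij with ⟨i, j | j⟩
    · have h1 := (hc1 i j).2 (Set.mem_univ a) (Set.mem_univ b) hs ht hst
      have := mul_le_mul_of_nonneg_left h1 (hysnn i j)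
      simp only [smul_eq_mul] at this
      linarith
    · rw [hc2 i j a b s t hst]; apply le_of_eq; ring
  -- Lagrangian in terms of ys
  have hys_dot : ∀ u : Idx N m p → ℝ, ys ⬝ᵥ u
      = (∑ j, mus j * ∑ i, u (i, Sum.inl j)) + (∑ j, lams j * ∑ i, u (i, Sum.inr j)) := by
    intro u
    simp only [dotProduct, Fintype.sum_prod_type, hys, Fintype.sum_sum_type, Sum.elim_inl,
      Sum.elim_inr, Finset.sum_add_distrib, Finset.mul_sum]
    rw [Finset.sum_comm, Finset.sum_comm (f := fun i j => lams j * u (i, Sum.inr j))]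
  have hsad : ∀ w, (∀ i, w i ∈ X i) → F xs ≤ F w + ys ⬝ᵥ tg w := by
    intro w hw
    have h := hsaddle w hw
    rw [hcs] at h
    simp only [hxsh, mul_zero, Finset.sum_const_zero, add_zero] at h
    rw [hys_dot]
    simp only [htg1, htg2]
    linarith
  -- matrices
  have hAp : A.PosSemidef := by rw [hA]; exact hPA.kronecker PosSemidef.one
  have hHp : Htld.PosSemidef := by rw [hHtld]; exact hPHt.kronecker PosSemidef.one
  have hDif : ((PH ⊗ₖ (1 : Matrix (Blk m p) (Blk m p) ℝ)) - Htld).PosSemidef := by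
    have : (PH ⊗ₖ (1 : Matrix (Blk m p) (Blk m p) ℝ)) - Htld
        = (PH - PHt) ⊗ₖ (1 : Matrix (Blk m p) (Blk m p) ℝ) := by
      rw [hHtld]; ext a b; simp [sub_mul]
    rw [this]; exact hHHt.kronecker PosSemidef.one
  set H := PH ⊗ₖ (1 : Matrix (Blk m p) (Blk m p) ℝ) with hHdef
  obtain ⟨dd, hdd⟩ : ∃ dd : Fin N → ℝ, dd = fun i => (PA + ρ • PH) i i := ⟨_, rfl⟩
  have hddpos : ∀ i, 0 < dd i := by
    intro i; rw [hdd]; exact hDpd.diag_pos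
  have hPD : PA + ρ • PH = diagonal dd := by
    rw [hdd]; exact (hDdiag.diagonal_diag).symm
  have hDd : D = diagonal (fun ij : Idx N m p => dd ij.1) := by
    have : D = (PA + ρ • PH) ⊗ₖ (1 : Matrix (Blk m p) (Blk m p) ℝ) := by
      rw [hD, hA, hHdef]; ext a b; simp [add_mul, mul_assoc]
    rw [this, hPD]
    rw [← diagonal_one, diagonal_kronecker_diagonal]
    simp
  have hDinv : D⁻¹ = diagonal (fun ij : Idx N m p => (dd ij.1)⁻¹) := by
    apply Matrix.inv_eq_right_inv
    rw [hDd, diagonal_mul_diagonal, ← diagonal_one]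
    congr 1; ext ij
    exact mul_inv_cancel₀ (hddpos _).ne'
  obtain ⟨δ, hδ⟩ : ∃ δ : Idx N m p → ℝ, δ = fun ij => (dd ij.1)⁻¹ := ⟨_, rfl⟩
  rw [← hδ] at hDinv
  have hδpos : ∀ ij, 0 < δ ij := by intro ij; rw [hδ]; exact inv_pos.2 (hddpos _)
  -- null vectors
  have hnullHt : ∀ u : Blk m p → ℝ, Htld *ᵥ (fun ij : Idx N m p => u ij.2) = 0 := by
    intro u; ext ⟨i, j⟩
    rw [hHtld, kron_mulVec]
    exact congrFun ((hPHtnull _).2 ⟨u j, rfl⟩) i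
  have hnullH : ∀ u : Blk m p → ℝ, H *ᵥ (fun ij : Idx N m p => u ij.2) = 0 := by
    intro u; ext ⟨i, j⟩
    rw [hHdef, kron_mulVec]
    exact congrFun ((hPHnull _).2 ⟨u j, rfl⟩) i
  have hnullhalf : ∀ u : Blk m p → ℝ, Hhalf *ᵥ (fun ij : Idx N m p => u ij.2) = 0 :=
    fun u => half_null hHhalfpsd hHhalfsq _ (hnullHt u)
  have hys' : ys = fun ij : Idx N m p => Sum.elim mus lams ij.2 := by
    ext ⟨i, j⟩; exact hys i j
  -- residual of the primal solution
  obtain ⟨r, hr⟩ : ∃ r, r = tg xs - vstar := ⟨_, rfl⟩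
  have hHr : Htld *ᵥ r = 0 := by
    rw [hr, hvstar, hzstar, mulVec_sub, mulVec_mulVec, mulVec_mulVec, ← hHhalfsq,
      Matrix.mul_assoc, Matrix.mul_assoc, mp_left hHhalfpsd hHhalfdag, sub_self]
  have hrt : ∀ j, ∃ t, ∀ i, r (i, j) = t := by
    intro j
    have : PHt *ᵥ (fun i => r (i, j)) = 0 := by
      ext i
      have := congrFun hHr (i, j)
      rw [hHtld, kron_mulVec] at this
      exact this
    obtain ⟨t, ht⟩ := (hPHtnull _).1 this
    exact ⟨t, fun i => congrFun ht i⟩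
  choose τ hτ using hrt
  have hNpos : (0 : ℝ) < N := by exact_mod_cast hN
  have hvsum : ∀ j, ∑ i, vstar (i, j) = 0 := by
    intro j
    have h1 : (fun ij : Idx N m p => (Pi.single j (1 : ℝ) : Blk m p → ℝ) ij.2) ⬝ᵥ vstar = 0 := by
      rw [hvstar, psd_symm hHhalfpsd, hnullhalf, dotProduct_zero]
    simpa [dotProduct, Fintype.sum_prod_type, Pi.single_apply] using h1
  have hNτ : ∀ j, (N : ℝ) * τ j = ∑ i, tg xs (i, j) := by
    intro j
    have : ∑ i, r (i, j) = ∑ i, tg xs (i, j) := by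
      rw [hr]; simp [Finset.sum_sub_distrib, hvsum]
    rw [← this]; simp [hτ]
  have hτ1 : ∀ j, τ (Sum.inl j) ≤ 0 := by
    intro j
    have h := hNτ (Sum.inl j)
    simp only [htg1] at h
    have := hxsg j
    by_contra hcon
    push Not at hcon
    have := mul_pos hNpos hcon
    linarith
  have hτ2 : ∀ j, τ (Sum.inr j) = 0 := by
    intro j
    have h := hNτ (Sum.inr j)
    simp only [htg2, hxsh] at h
    rcases mul_eq_zero.1 h with h | h
    · linarith
    · exact h
  -- dual step
  obtain ⟨u, hu⟩ : ∃ u : ℕ → Idx N m p → ℝ,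
      u = fun k => (A *ᵥ y k) - (Hhalf *ᵥ z k) + tg (x (k + 1)) := ⟨_, rfl⟩
  have hyδ : ∀ k, y (k + 1) = fun ij => δ ij * projK (u k) ij := by
    intro k
    rw [hyupd k, hDinv, hu]
    ext ij
    rw [← projK_smul δ _ hδpos]
    congr 1
    ext a
    rw [mulVec_diagonal]
  have hyK : ∀ k i j, 0 ≤ y (k + 1) (i, Sum.inl j) := by
    intro k i j
    rw [hyδ]
    exact mul_nonneg (hδpos _).le (le_max_right _ _)
  have hDy : ∀ k, D *ᵥ y (k + 1) = projK (u k) := by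
    intro k
    rw [hyδ, hDd]
    ext ij
    rw [mulVec_diagonal, hδ]
    field_simp [(hddpos ij.1).ne']
  obtain ⟨σ, hσ⟩ : ∃ σ : ℕ → Idx N m p → ℝ, σ = fun k => - projKpolar (u k) := ⟨_, rfl⟩
  have hσy : ∀ k, y (k + 1) ⬝ᵥ σ k = 0 := by
    intro k
    rw [hyδ, hσ]
    refine Finset.sum_eq_zero fun ij _ => ?_
    have := projK_orth (u k) ij
    simp only [Pi.neg_apply]
    linear_combination (-δ ij) * this
  have hσys : ∀ k, 0 ≤ ys ⬝ᵥ σ k := by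
    intro k
    rw [hσ]
    refine Finset.sum_nonneg fun ij _ => ?_
    rcases ij with ⟨i, j | j⟩
    · refine mul_nonneg (hysnn i j) ?_
      simp [projKpolar]
    · simp [projKpolar]
  have hv : ∀ k, Hhalf *ᵥ z (k + 1) = Hhalf *ᵥ z k + ρ • (Htld *ᵥ y (k + 1)) := by
    intro k
    rw [hzupd, mulVec_add, mulVec_smul, mulVec_mulVec, hHhalfsq]
  have hgk : ∀ k, tg (x (k + 1)) = A *ᵥ (y (k + 1) - y k) + Hhalf *ᵥ z (k + 1)
      + ρ • ((H - Htld) *ᵥ y (k + 1)) - σ k := by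
    intro k
    have h1 := hDy k
    have h2 : projK (u k) = u k + σ k := by
      ext ij; rw [projK_decomp, hσ]; simp [sub_eq_add_neg]
    rw [h2, hD, add_mulVec, smul_mulVec] at h1
    rw [hv, mulVec_sub, sub_mulVec]
    have h3 : u k = (A *ᵥ y k) - (Hhalf *ᵥ z k) + tg (x (k + 1)) := by rw [hu]
    rw [h3] at h1
    ext ij
    have h4 := congrFun h1 ij
    simp only [Pi.add_apply, Pi.sub_apply, Pi.smul_apply, smul_eq_mul] at h4 ⊢
    linarith
  -- the shifted multiplier sequence
  obtain ⟨w, hw⟩ : ∃ w : ℕ → Idx N m p → ℝ,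
      w = fun k => Htdag *ᵥ ((Hhalf *ᵥ z 0) - vstar) + ρ • ∑ l ∈ Finset.range k, y (l + 1) :=
    ⟨_, rfl⟩
  have hw0 : w 0 = Htdag *ᵥ ((Hhalf *ᵥ z 0) - vstar) := by rw [hw]; simp
  have hwS : ∀ k, w (k + 1) = w k + ρ • y (k + 1) := by
    intro k; rw [hw]; simp only [Finset.sum_range_succ, smul_add, add_assoc]
  have hHw : ∀ k, Htld *ᵥ w k = (Hhalf *ᵥ z k) - vstar := by
    intro k
    induction k with
    | zero =>
      rw [hw0, hvstar, ← mulVec_sub, mulVec_mulVec, mulVec_mulVec,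
        mp_half hHhalfpsd hHhalfsq hHtdag]
    | succ k ih =>
      rw [hwS, mulVec_add, mulVec_smul, ih, hv]; abel
  have hq0 : quadForm Htdag ((Hhalf *ᵥ z 0) - vstar) = quadForm Htld (w 0) := by
    unfold quadForm
    rw [hHw 0, hw0, dotProduct_comm]
  have hwstep : ∀ k, (quadForm Htld (w (k + 1)) - quadForm Htld (w k)) / 2
      ≤ ρ * (y (k + 1) ⬝ᵥ ((Hhalf *ᵥ z (k + 1)) - vstar)) := by
    intro k
    have h := psd_three hHp (w (k + 1)) (w k) 0
    simp only [sub_zero] at h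
    have h2 : w (k + 1) - w k = ρ • y (k + 1) := by rw [hwS]; simp
    rw [h2, psd_symm hHp, hHw, smul_dotProduct, smul_eq_mul] at h
    exact h
  have hyg : ∀ k, y (k + 1) ⬝ᵥ tg xs ≤ y (k + 1) ⬝ᵥ vstar := by
    intro k
    have h1 : tg xs = vstar + r := by rw [hr]; abel
    rw [h1, dotProduct_add]
    have : y (k + 1) ⬝ᵥ r ≤ 0 := by
      refine Finset.sum_nonpos fun ij _ => ?_
      rcases ij with ⟨i, j | j⟩
      · rw [hτ]; exact mul_nonpos_of_nonneg_of_nonpos (hyK k i j) (hτ1 j)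
      · rw [hτ, hτ2]; simp
    linarith
  -- primal step
  obtain ⟨S, hS⟩ : ∃ S : ℕ → ℝ, S = fun k => ∑ i, ∑ j, (x k i j - xs i j) ^ 2 := ⟨_, rfl⟩
  have hS0 : ∀ k, 0 ≤ S k := by
    intro k; rw [hS]; positivity
  have hprim : ∀ k, F (x (k + 1)) + y (k + 1) ⬝ᵥ tg (x (k + 1))
      ≤ F xs + y (k + 1) ⬝ᵥ tg xs + (α / 2) * (S k - S (k + 1)) := by
    intro k
    have h := opt_step F hFc tg hc1 hc2 δ ((A *ᵥ y k) - (Hhalf *ᵥ z k)) hδpos α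
      (x (k + 1)) (x k) xs (by
        intro t ht0 ht1
        have := hxmin k ((1 - t) • x (k + 1) + t • xs) (fun i =>
          hXcv i (hxX k i) (hxsX i) (sub_nonneg.2 ht1) ht0.le (by ring))
        rw [hDinv] at this
        exact this)
    have h3 : u k = (A *ᵥ y k) - (Hhalf *ᵥ z k) + tg (x (k + 1)) := by rw [hu]
    rw [← h3, ← hyδ] at h
    have h4 : 0 ≤ ∑ i, ∑ j, (x (k + 1) i j - x k i j) ^ 2 := by positivity
    have h5 := mul_nonneg (half_pos hα).le h4
    rw [hS]
    simp only at h ⊢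
    linarith
  -- y-dot-g
  have hyy : ∀ k, (quadForm A (y (k + 1)) - quadForm A (y k)) / 2
      + y (k + 1) ⬝ᵥ (Hhalf *ᵥ z (k + 1)) ≤ y (k + 1) ⬝ᵥ tg (x (k + 1)) := by
    intro k
    have h1 := psd_three hAp (y (k + 1)) (y k) 0
    have h2 := mul_nonneg hρ.le (psd_nonneg hDif (y (k + 1)))
    simp only [sub_zero] at h1
    rw [hgk k, dotProduct_sub, dotProduct_add, dotProduct_add, dotProduct_smul, hσy, smul_eq_mul]
    linarith
  have hysg : ∀ k, ys ⬝ᵥ tg (x (k + 1)) = ys ⬝ᵥ (A *ᵥ (y (k + 1) - y k)) - ys ⬝ᵥ σ k := by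
    intro k
    have h1 : ys ⬝ᵥ (Hhalf *ᵥ z (k + 1)) = 0 := by
      rw [psd_symm hHhalfpsd, hys', hnullhalf, dotProduct_zero]
    have h2 : ys ⬝ᵥ ((H - Htld) *ᵥ y (k + 1)) = 0 := by
      rw [psd_symm hDif, hys', sub_mulVec, hnullH, hnullHt, sub_zero, dotProduct_zero]
    rw [hgk k, dotProduct_sub, dotProduct_add, dotProduct_add, dotProduct_smul, h1, h2]
    simp
  -- potential without ys
  have hstep1 : ∀ k, F (x (k + 1)) - F xs
      ≤ (1 / (2 * ρ)) * (quadForm Htld (w k) - quadForm Htld (w (k + 1)))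
        + (1 / 2) * (quadForm A (y k) - quadForm A (y (k + 1))) + (α / 2) * (S k - S (k + 1)) := by
    intro k
    have h1 := hprim k
    have h2 := hyy k
    have h3 := hyg k
    have h4 := hwstep k
    rw [dotProduct_sub] at h4
    have h5 : (1 / (2 * ρ)) * (quadForm Htld (w (k + 1)) - quadForm Htld (w k))
        ≤ y (k + 1) ⬝ᵥ (Hhalf *ᵥ z (k + 1)) - y (k + 1) ⬝ᵥ vstar := by
      rw [one_div, inv_mul_le_iff₀ (by positivity)]
      linarith
    linarith
  have hstep2 : ∀ k, quadForm A (y (k + 1) - ys) + α * S (k + 1)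
        + (1 / ρ) * quadForm Htld (w (k + 1))
      ≤ quadForm A (y k - ys) + α * S k + (1 / ρ) * quadForm Htld (w k) := by
    intro k
    have h1 := hprim k
    have h3 := hyg k
    have h4 := hwstep k
    rw [dotProduct_sub] at h4
    have h5 : (1 / ρ) * ((quadForm Htld (w (k + 1)) - quadForm Htld (w k)) / 2)
        ≤ y (k + 1) ⬝ᵥ (Hhalf *ᵥ z (k + 1)) - y (k + 1) ⬝ᵥ vstar := by
      rw [one_div, inv_mul_le_iff₀ (by positivity)]
      linarith
    have h6 := hsad (x (k + 1)) (hxX k)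
    rw [hysg] at h6
    have h7 := psd_three hAp (y (k + 1)) (y k) ys
    rw [sub_dotProduct] at h7
    have h8 := mul_nonneg hρ.le (psd_nonneg hDif (y (k + 1)))
    have h9 := hσys k
    have h10 : y (k + 1) ⬝ᵥ tg (x (k + 1)) = y (k + 1) ⬝ᵥ (A *ᵥ (y (k + 1) - y k))
        + y (k + 1) ⬝ᵥ (Hhalf *ᵥ z (k + 1))
        + ρ * (y (k + 1) ⬝ᵥ ((H - Htld) *ᵥ y (k + 1))) := by
      conv_lhs => rw [hgk k]
      rw [dotProduct_sub, dotProduct_add, dotProduct_add, dotProduct_smul, hσy, smul_eq_mul,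
        sub_zero]
    linarith
  have hpot : ∀ k, quadForm A (y k - ys) + α * S k + (1 / ρ) * quadForm Htld (w k)
      ≤ quadForm A (y 0 - ys) + α * S 0 + (1 / ρ) * quadForm Htld (w 0) := by
    intro k
    induction k with
    | zero => exact le_refl _
    | succ k ih => exact (hstep2 k).trans ih
  have hsum1 : ∀ k, ∑ l ∈ Finset.Icc 1 k, (F (x l) - F xs)
      ≤ (1 / (2 * ρ)) * (quadForm Htld (w 0) - quadForm Htld (w k))
        + (1 / 2) * (quadForm A (y 0) - quadForm A (y k)) + (α / 2) * (S 0 - S k) := by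
    intro k
    induction k with
    | zero => simp
    | succ k ih =>
      rw [Finset.sum_Icc_succ_top (by omega)]
      linarith [hstep1 k]
  have hsum2 : ∀ k, ∑ l ∈ Finset.Icc 1 k, (ys ⬝ᵥ tg (x l)) ≤ ys ⬝ᵥ (A *ᵥ (y k - y 0)) := by
    intro k
    induction k with
    | zero => simp
    | succ k ih =>
      rw [Finset.sum_Icc_succ_top (by omega), hysg]
      have := hσys k
      simp only [mulVec_sub, dotProduct_sub] at ih ⊢
      linarith
  -- norm of ys
  have hC1' : Real.sqrt (quadForm A ys) ≤ C1 := by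
    have h1 := psd_max hPA lam1 hlam1max (fun _ => 1)
    have h1' := psd_nonneg hPA (fun _ => 1)
    have hone : ((fun _ => 1 : Fin N → ℝ) ⬝ᵥ (fun _ => 1)) = N := by simp [dotProduct]
    rw [hone] at h1
    have h0 : 0 ≤ (N : ℝ) * lam1 := by linarith
    rw [hC1, ← Real.sqrt_mul h0]
    apply Real.sqrt_le_sqrt
    have h2 : quadForm A ys = ((fun _ => 1 : Fin N → ℝ) ⬝ᵥ (PA *ᵥ (fun _ => 1)))
        * ((∑ j, (mus j) ^ 2) + ∑ j, (lams j) ^ 2) := by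
      have h3 : ∀ i j, (A *ᵥ ys) (i, j) = Sum.elim mus lams j * (PA *ᵥ (fun _ => 1)) i := by
        intro i j
        rw [hA, kron_mulVec]
        simp only [hys, mulVec, dotProduct, Finset.mul_sum]
        exact Finset.sum_congr rfl fun _ _ => by ring
      have h4 : (∑ j, (mus j) ^ 2) + ∑ j, (lams j) ^ 2
          = ∑ j : Blk m p, (Sum.elim mus lams j) ^ 2 := by
        rw [Fintype.sum_sum_type]; simp
      rw [h4]
      unfold quadForm
      simp only [dotProduct, Fintype.sum_prod_type]
      rw [Finset.sum_mul_sum]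
      refine Finset.sum_congr rfl fun i _ => Finset.sum_congr rfl fun j _ => ?_
      rw [h3, hys]; ring
    rw [h2]
    exact mul_le_mul_of_nonneg_right (by linarith) (by positivity)
  have hC10 : 0 ≤ C1 := (Real.sqrt_nonneg _).trans hC1'
  have hsq : ∀ v, Real.sqrt (quadForm A v) ^ 2 = quadForm A v :=
    fun v => Real.sq_sqrt (psd_nonneg hAp v)
  have hyk : ∀ k, Real.sqrt (quadForm A (y k - ys)) ≤ C2 := by
    intro k
    rw [hC2]
    apply Real.sqrt_le_sqrt
    have h1 := hpot k
    have h2 : 0 ≤ α * S k := mul_nonneg hα.le (hS0 k)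
    have h3 : 0 ≤ (1 / ρ) * quadForm Htld (w k) :=
      mul_nonneg (by positivity) (psd_nonneg hHp _)
    have h4 : quadForm A (y 0 - ys) ≤ (Real.sqrt (quadForm A (y 0)) + C1) ^ 2 := by
      have h5 : quadForm A (y 0 - ys)
          = quadForm A (y 0) - 2 * (y 0 ⬝ᵥ (A *ᵥ ys)) + quadForm A ys := by
        simp only [quadForm, mulVec_sub, dotProduct_sub, sub_dotProduct, psd_symm hAp ys (y 0)]
        ring
      have h6 := neg_le_of_abs_le (psd_cs hAp (y 0) ys)
      have s1 := hsq (y 0)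
      have s2 := hsq ys
      rw [h5]
      have h7 := Real.sqrt_nonneg (quadForm A (y 0))
      have h8 := Real.sqrt_nonneg (quadForm A ys)
      have h9 := mul_le_mul_of_nonneg_left hC1' h7
      have h10 := pow_le_pow_left₀ h8 hC1' 2
      nlinarith
    rw [hq0]
    have h10 : S 0 = ∑ i, ∑ j, (x 0 i j - xs i j) ^ 2 := by rw [hS]
    rw [← h10]
    linarith
  intro k hk
  have hk0 : (0 : ℝ) < k := by exact_mod_cast hk
  have hxb : xbar k = (1 / (k : ℝ)) • ∑ l ∈ Finset.Icc 1 k, x l := by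
    ext i j
    rw [hxbar]
    simp only [Pi.smul_apply, Finset.sum_apply, smul_eq_mul]
    ring
  have hxbX : ∀ i, xbar k i ∈ X i := by
    intro i
    have h1 : xbar k i = ∑ l ∈ Finset.Icc 1 k, (1 / (k : ℝ)) • x l i := by
      rw [hxb, ← Finset.smul_sum]
      simp only [Pi.smul_apply, Finset.sum_apply]
    rw [h1]
    refine (hXcv i).sum_mem (fun _ _ => by positivity) (by simp; field_simp) ?_
    intro l hl
    obtain ⟨l', rfl⟩ : ∃ l', l = l' + 1 := ⟨l - 1, by have := (Finset.mem_Icc.1 hl).1; omega⟩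
    exact hxX l' i
  constructor
  · have h1 := hsad (xbar k) hxbX
    have h2 := jensen _ hLc x k hk
    rw [← hxb] at h2
    have h3 := hsum2 k
    have h4 : ys ⬝ᵥ (A *ᵥ (y k - y 0)) ≤ C1 * (Real.sqrt (quadForm A (y 0)) + C1 + C2) := by
      have e : y k - y 0 = (y k - ys) + ys - y 0 := by abel
      rw [e, mulVec_sub, mulVec_add, dotProduct_sub, dotProduct_add]
      have a1 := le_of_abs_le (psd_cs hAp ys (y k - ys))
      have a2 := neg_le_of_abs_le (psd_cs hAp ys (y 0))
      have a3 : ys ⬝ᵥ (A *ᵥ ys) = Real.sqrt (quadForm A ys) ^ 2 := (hsq ys).symm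
      have b1 : Real.sqrt (quadForm A ys) * Real.sqrt (quadForm A (y k - ys)) ≤ C1 * C2 :=
        mul_le_mul hC1' (hyk k) (Real.sqrt_nonneg _) hC10
      have b2 := mul_le_mul_of_nonneg_right hC1' (Real.sqrt_nonneg (quadForm A (y 0)))
      have b3 := pow_le_pow_left₀ (Real.sqrt_nonneg _) hC1' 2
      rw [a3]
      nlinarith
    have h5 : (∑ l ∈ Finset.Icc 1 k, ys ⬝ᵥ tg (x l)) / (k : ℝ)
        ≤ (C1 * (Real.sqrt (quadForm A (y 0)) + C1 + C2)) / (k : ℝ) :=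
      div_le_div_of_nonneg_right (h3.trans h4) hk0.le
    linarith
  · have h1 := jensen F hFc x k hk
    rw [← hxb] at h1
    have h2 := hsum1 k
    have h3 : F (xbar k) - F xs ≤ (∑ l ∈ Finset.Icc 1 k, (F (x l) - F xs)) / (k : ℝ) := by
      rw [Finset.sum_sub_distrib, sub_div]
      have : (∑ l ∈ Finset.Icc 1 k, F xs) / (k : ℝ) = F xs := by
        simp; field_simp
      rw [this]; linarith
    refine h3.trans (div_le_div_of_nonneg_right (h2.trans ?_) hk0.le)
    rw [hq0]
    have h10 : S 0 = ∑ i, ∑ j, (x 0 i j - xs i j) ^ 2 := by rw [hS]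
    rw [← h10]
    have c1 : 0 ≤ (1 / (2 * ρ)) * quadForm Htld (w k) :=
      mul_nonneg (by positivity) (psd_nonneg hHp _)
    have c2 : 0 ≤ quadForm A (y k) := psd_nonneg hAp _
    have c3 : 0 ≤ (α / 2) * S k := mul_nonneg (by positivity) (hS0 k)
    linarith
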